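/- arXiv:2604.06651 — 2 statements merged into one kernel-verified Lean document; each statement's English description precedes it below -/
import Mathlib

section
/- There exist a convex continuously differentiable function f : ℝ² → ℝ with unique minimizer at the origin, a point X₀ ≠ 0, and a function X : [0,∞) → ℝ², continuous on [0,∞) and twice continuously differentiable on (0,∞), satisfying Ẍ(t) + (3/t)·Ẋ(t) + ∇f(X(t)) = 0 for all t > 0, X(0) = X₀, and Ẋ(0) = 0 (in the sense that Ẋ(t) → 0 as t → 0⁺), such that the path length ∫₀^∞ ‖Ẋ(t)‖ dt is infinite. -/
/-!
The potential `f` is radial, with radial derivative `1 / √(1 - log r)` near the origin. It is almost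
homogeneous of degree `1`: the defect `⟪x, ∇f(x)⟫ - f(x)` in Euler's identity is at most
`f(x) / (2 (1 - log ‖x‖))`. The Lyapunov function `ℰ = t² f(x) + ‖2 x + t ẋ‖² / 2` of Su, Boyd and
Candès has derivative `-2 t (⟪x, ∇f(x)⟫ - f(x))`, and it forces `‖x(t)‖ ≤ 1 / t`; hence `ℰ` decays
no faster than `1 / (1 + log t)`. Up to the derivative of the bounded quantity `t ⟪x, ẋ⟫` and an
integrable term, `ℰ / t` is bounded by a multiple of `‖ẋ‖`, so the path length is infinite because
`∫ dt / (t (1 + log t))` diverges.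

Since `∇f` is not Lipschitz at the origin, the trajectory is obtained by compactness, as a limit of
Tonelli's delayed approximations.
-/

open Filter Topology MeasureTheory Set
open scoped RealInnerProductSpace

section Volterra

variable {E : Type*}

/-- A Volterra (causal) operator on continuous curves: the value of `G u` at time `t ≥ 0` depends
only on `u` on `[0, t)`. In particular all the `G u` have the same value at `0`. -/
def IsVolterra [TopologicalSpace E] (G : C(ℝ, E) → C(ℝ, E)) : Prop :=
  ∀ ⦃u w : C(ℝ, E)⦄ ⦃t : ℝ⦄, 0 ≤ t → EqOn u w (Ico 0 t) → G u t = G w t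

/-- The delayed time `t ↦ max (t - h) 0` of Tonelli's approximation scheme. -/
def delay (h : ℝ) : C(ℝ, ℝ) := ⟨fun t => max (t - h) 0, by fun_prop⟩

lemma continuous_delay : Continuous delay :=
  ContinuousMap.continuous_of_continuous_uncurry _ (by
    simp only [Function.uncurry_def, delay, ContinuousMap.coe_mk]; fun_prop)

/-- One step of Tonelli's scheme with delay `h`: its `k`-th iterate solves the delayed
equation `u t = G u (t - h)` on `[0, k * h]`. -/
def tonelliStep [TopologicalSpace E] (G : C(ℝ, E) → C(ℝ, E)) (h : ℝ) (u : C(ℝ, E)) : C(ℝ, E) :=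
  (G u).comp (delay h)

lemma IsVolterra.eqOn_tonelliStep_iterate [TopologicalSpace E] {G : C(ℝ, E) → C(ℝ, E)}
    (hG : IsVolterra G) {h : ℝ} (hh : 0 ≤ h) (u : C(ℝ, E)) (k : ℕ) :
    EqOn (G ((tonelliStep G h)^[k + 1] u)) (G ((tonelliStep G h)^[k] u)) (Icc 0 (k * h)) := by
  induction k with
  | zero =>
    intro t ht
    obtain rfl : t = 0 := by simpa using ht
    exact hG le_rfl (by simp)
  | succ k ih =>
    intro t ht
    refine hG ht.1 fun r hr => ?_
    have hrt : r ≤ (k + 1 : ℕ) * h := hr.2.le.trans ht.2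
    push_cast at hrt
    have hdelay : r - h ≤ k * h := by linarith
    rw [Function.iterate_succ_apply' _ (k + 1)]
    conv_rhs => rw [Function.iterate_succ_apply']
    exact ih ⟨le_max_right _ _, max_le hdelay (by positivity)⟩

lemma IsVolterra.exists_eqOn_tonelliStep [TopologicalSpace E] [Nonempty E]
    {G : C(ℝ, E) → C(ℝ, E)} (hG : IsVolterra G) {h : ℝ} (hh : 0 < h) (T : ℝ) :
    ∃ u, EqOn (G (tonelliStep G h u)) (G u) (Icc 0 T) := by
  obtain ⟨k, hk⟩ := exists_nat_ge (T / h)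
  let u₀ : C(ℝ, E) := .const ℝ (Classical.arbitrary E)
  refine ⟨(tonelliStep G h)^[k] u₀, ?_⟩
  rw [← Function.iterate_succ_apply' (tonelliStep G h)]
  exact (hG.eqOn_tonelliStep_iterate hh.le u₀ k).mono
    (Icc_subset_Icc_right ((div_le_iff₀ hh).1 hk))

theorem IsVolterra.exists_eqOn_Ici [TopologicalSpace E] [TopologicalSpace.MetrizableSpace E]
    [Nonempty E] {G : C(ℝ, E) → C(ℝ, E)} (hG : IsVolterra G) (hcont : Continuous G)
    {K : Set C(ℝ, E)} (hK : IsCompact K) (hGK : ∀ u, G u ∈ K) : ∃ x, EqOn (G x) x (Ici 0) := by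
  choose u hu using fun n : ℕ =>
    hG.exists_eqOn_tonelliStep (Nat.one_div_pos_of_nat (α := ℝ) (n := n)) n
  obtain ⟨y, -, σ, hσ, hy⟩ := hK.tendsto_subseq fun n => hGK (u n)
  have hdelay : Tendsto (fun n => delay (1 / ((σ n : ℝ) + 1))) atTop (𝓝 (delay 0)) :=
    continuous_delay.continuousAt.tendsto.comp
      (tendsto_one_div_add_atTop_nhds_zero_nat.comp hσ.tendsto_atTop)
  have hstep : Tendsto (fun n => tonelliStep G (1 / ((σ n : ℝ) + 1)) (u (σ n))) atTop
      (𝓝 (y.comp (delay 0))) :=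
    ContinuousMap.continuous_comp'.continuousAt.tendsto.comp (hdelay.prodMk_nhds hy)
  have hfix : EqOn (G (y.comp (delay 0))) y (Ici 0) := by
    intro t ht
    have heval : ∀ v : C(ℝ, E), Tendsto (fun w : C(ℝ, E) => w t) (𝓝 v) (𝓝 (v t)) :=
      fun v => (continuous_eval_const t).tendsto v
    refine tendsto_nhds_unique ((heval _).comp ((hcont.tendsto _).comp hstep))
      (((heval y).comp hy).congr' ?_)
    filter_upwards [hσ.tendsto_atTop.eventually_ge_atTop ⌈t⌉₊] with n hn
    exact (hu (σ n) ⟨ht, (Nat.le_ceil t).trans (Nat.cast_le.2 hn)⟩).symm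
  refine ⟨y.comp (delay 0), fun t ht => (hfix ht).trans ?_⟩
  simp [delay, mem_Ici.1 ht]

end Volterra

section Compactness

lemma isCompact_setOf_dist_le_of_modulus {X Y : Type*} [TopologicalSpace X] [MetricSpace Y]
    [ProperSpace Y] (a : X) (c : Y) {b : X → X → ℝ} (hb : ∀ s, Tendsto (b s) (𝓝 s) (𝓝 0)) :
    IsCompact {u : C(X, Y) | u a = c ∧ ∀ s t, dist (u s) (u t) ≤ b s t} := by
  refine ArzelaAscoli.isCompact_of_equicontinuous _ ?_ fun s =>
    Metric.equicontinuousAt_of_continuity_modulus (b s) (hb s) _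
      (Eventually.of_forall fun t u => u.2.2 s t)
  have himage : ContinuousMap.toFun '' {u : C(X, Y) | u a = c ∧ ∀ s t, dist (u s) (u t) ≤ b s t} =
      {u : X → Y | u a = c ∧ ∀ s t, dist (u s) (u t) ≤ b s t} := by
    refine Subset.antisymm (image_subset_iff.2 fun u hu => hu) fun u hu => ?_
    have hcont : Continuous u := continuous_iff_continuousAt.2 fun s =>
      tendsto_iff_dist_tendsto_zero.2 <| squeeze_zero (fun _ => dist_nonneg)
        (fun t => dist_comm (u t) (u s) ▸ hu.2 s t) (hb s)
    exact ⟨⟨u, hcont⟩, hu, rfl⟩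
  rw [himage]
  refine (isCompact_univ_pi fun t => isCompact_closedBall c (b a t)).of_isClosed_subset ?_ ?_
  · simp only [ofPred_and, ofPred_forall]
    exact (isClosed_eq (continuous_apply a) continuous_const).inter <| isClosed_iInter fun s =>
      isClosed_iInter fun t => isClosed_le (by fun_prop) continuous_const
  · rintro u ⟨hua, hu⟩ t -
    rw [Metric.mem_closedBall, dist_comm, ← hua]
    exact hu a t

end Compactness

section VanishingDamping

variable {E : Type*} [NormedAddCommGroup E] [NormedSpace ℝ E] {α C : ℝ} {g : E → E}

/-- The pair `(x, v)` of position and velocity solves `ẍ + (α/t) ẋ + g(x) = 0` on `(0, ∞)`, starting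
at rest at time `0`. The curves are defined and continuous on all of `ℝ`, but nothing is required
of the motion at negative times. -/
structure IsVanishingDampingFlow (α : ℝ) (g : E → E) (x v : ℝ → E) : Prop where
  continuous_pos : Continuous x
  continuous_vel : Continuous v
  vel_zero : v 0 = 0
  hasDerivAt_pos : ∀ t > 0, HasDerivAt x (v t) t
  hasDerivAt_vel : ∀ t > 0, HasDerivAt v (-(α / t) • v t - g (x t)) t

lemma IsVanishingDampingFlow.tendsto_vel {x v : ℝ → E} (h : IsVanishingDampingFlow α g x v) :
    Tendsto v (𝓝[>] 0) (𝓝 0) := by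
  simpa only [h.vel_zero] using (h.continuous_vel.tendsto 0).mono_left nhdsWithin_le_nhds

lemma IsVanishingDampingFlow.continuousOn_acc {x v : ℝ → E} (h : IsVanishingDampingFlow α g x v)
    (hg : Continuous g) : ContinuousOn (fun t => -(α / t) • v t - g (x t)) (Ioi 0) :=
  ((continuousOn_const.div continuousOn_id fun _ ht => ne_of_gt ht).neg.smul
    h.continuous_vel.continuousOn).sub (hg.comp h.continuous_pos).continuousOn

/-- The velocity `v(s) = -s^(-α) ∫₀ˢ r^α g(u(r)) dr` solving `v̇ + (α/s) v = -g(u)`, `v(0) = 0`,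
rescaled to the fixed interval `[0, 1]` to make it visibly regular at `s = 0`. -/
noncomputable def dampedVelocity (α : ℝ) (g : E → E) (u : ℝ → E) (s : ℝ) : E :=
  -(s • ∫ r in (0 : ℝ)..1, r ^ α • g (u (s * r)))

lemma dampedVelocity_zero (u : ℝ → E) : dampedVelocity α g u 0 = 0 := by
  simp [dampedVelocity]

lemma dampedVelocity_of_pos (u : ℝ → E) {s : ℝ} (hs : 0 < s) :
    dampedVelocity α g u s = -(s ^ (-α) • ∫ r in (0 : ℝ)..s, r ^ α • g (u r)) := by
  have hscale : ∫ r in (0 : ℝ)..1, (s * r) ^ α • g (u (s * r)) =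
      s ^ α • ∫ r in (0 : ℝ)..1, r ^ α • g (u (s * r)) := by
    rw [← intervalIntegral.integral_smul]
    refine intervalIntegral.integral_congr fun r hr => ?_
    rw [uIcc_of_le zero_le_one] at hr
    simp only [Real.mul_rpow hs.le hr.1, mul_smul]
  have hsubst := intervalIntegral.smul_integral_comp_mul_left (a := 0) (b := 1)
    (fun r => r ^ α • g (u r)) s
  rw [mul_zero, mul_one, hscale] at hsubst
  rw [dampedVelocity, ← hsubst, smul_comm s, smul_smul, ← Real.rpow_add hs, neg_add_cancel,
    Real.rpow_zero, one_smul]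

lemma dampedVelocity_congr {u w : ℝ → E} {s : ℝ} (hs : 0 ≤ s) (h : EqOn u w (Icc 0 s)) :
    dampedVelocity α g u s = dampedVelocity α g w s := by
  refine congrArg (fun y => -(s • y)) (intervalIntegral.integral_congr fun r hr => ?_)
  rw [uIcc_of_le zero_le_one] at hr
  simp only [h ⟨mul_nonneg hs hr.1, mul_le_of_le_one_right hs hr.2⟩]

lemma norm_dampedVelocity_le (hα : 0 ≤ α) (hg : ∀ y, ‖g y‖ ≤ C) (u : ℝ → E) (s : ℝ) :
    ‖dampedVelocity α g u s‖ ≤ C * |s| := by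
  rw [dampedVelocity, norm_neg, norm_smul, Real.norm_eq_abs, mul_comm]
  gcongr
  have hbound : ∀ r ∈ uIoc (0 : ℝ) 1, ‖r ^ α • g (u (s * r))‖ ≤ C := fun r hr => by
    rw [uIoc_of_le zero_le_one] at hr
    rw [norm_smul, Real.norm_of_nonneg (Real.rpow_nonneg hr.1.le α)]
    exact (mul_le_of_le_one_left (norm_nonneg _) (Real.rpow_le_one hr.1.le hr.2 hα)).trans (hg _)
  simpa using intervalIntegral.norm_integral_le_of_norm_le_const hbound

lemma continuous_uncurry_dampedVelocity (hα : 0 ≤ α) (hg : Continuous g) :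
    Continuous fun p : C(ℝ, E) × ℝ => dampedVelocity α g p.1 p.2 := by
  refine (continuous_snd.smul ?_).neg
  apply intervalIntegral.continuous_parametric_intervalIntegral_of_continuous'
  exact ((Real.continuous_rpow_const hα).comp continuous_snd).smul (hg.comp (by fun_prop))

lemma continuous_dampedVelocity (hα : 0 ≤ α) (hg : Continuous g) {u : ℝ → E} (hu : Continuous u) :
    Continuous (dampedVelocity α g u) :=
  (continuous_uncurry_dampedVelocity hα hg).comp (Continuous.prodMk_right (⟨u, hu⟩ : C(ℝ, E)))

lemma hasDerivAt_dampedVelocity [CompleteSpace E] (hα : 0 ≤ α) (hg : Continuous g) {u : ℝ → E}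
    (hu : Continuous u) {t : ℝ} (ht : 0 < t) :
    HasDerivAt (dampedVelocity α g u) (-(α / t) • dampedVelocity α g u t - g (u t)) t := by
  have hpow : Continuous fun r : ℝ => r ^ α := Real.continuous_rpow_const hα
  have hmoment : HasDerivAt (fun s => ∫ r in (0 : ℝ)..s, r ^ α • g (u r)) (t ^ α • g (u t)) t :=
    ((hpow.smul (hg.comp hu)).integral_hasStrictDerivAt 0 t).hasDerivAt
  have hweight : HasDerivAt (fun s : ℝ => s ^ (-α)) (-α * t ^ (-α - 1)) t :=
    Real.hasDerivAt_rpow_const (Or.inl ht.ne')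
  refine ((hweight.smul hmoment).neg.congr_of_eventuallyEq ?_).congr_deriv ?_
  · filter_upwards [lt_mem_nhds ht] with s hs using dampedVelocity_of_pos u hs
  · rw [dampedVelocity_of_pos u ht, Real.rpow_sub_one ht.ne', smul_smul, ← Real.rpow_add ht]
    simp only [neg_add_cancel, Real.rpow_zero]
    module

/-- The integral operator whose fixed points are the solutions of `ẍ + (α/t) ẋ + g(x) = 0` that
start at rest at `x₀`. -/
noncomputable def dampingOperator (hα : 0 ≤ α) (hg : Continuous g) (x₀ : E) (u : C(ℝ, E)) :
    C(ℝ, E) where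
  toFun t := x₀ + ∫ s in (0 : ℝ)..t, dampedVelocity α g u s
  continuous_toFun := continuous_const.add <|
    intervalIntegral.continuous_primitive
      (fun _ _ => (continuous_dampedVelocity hα hg u.continuous).intervalIntegrable _ _) 0

section

variable (hα : 0 ≤ α) (hg : Continuous g) (x₀ : E)

lemma dampingOperator_apply_zero (u : C(ℝ, E)) : dampingOperator hα hg x₀ u 0 = x₀ := by
  simp [dampingOperator]

lemma isVolterra_dampingOperator : IsVolterra (dampingOperator hα hg x₀) := by
  intro u w t ht huw
  refine congrArg (x₀ + ·) (intervalIntegral.integral_congr_Ioo_of_le ht fun s hs => ?_)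
  exact dampedVelocity_congr hs.1.le (huw.mono (Icc_subset_Ico_right hs.2))

lemma continuous_dampingOperator : Continuous (dampingOperator hα hg x₀) := by
  refine ContinuousMap.continuous_of_continuous_uncurry _ (continuous_const.add ?_)
  have hvel := continuous_uncurry_dampedVelocity (E := E) hα hg
  refine intervalIntegral.continuous_parametric_intervalIntegral_of_continuous
    (f := fun p : C(ℝ, E) × ℝ => dampedVelocity α g p.1) ?_ continuous_snd
  exact hvel.comp (by fun_prop : Continuous fun q : (C(ℝ, E) × ℝ) × ℝ => (q.1.1, q.2))

lemma dist_dampingOperator_apply_le (hC : ∀ y, ‖g y‖ ≤ C) (u : C(ℝ, E)) (s t : ℝ) :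
    dist (dampingOperator hα hg x₀ u s) (dampingOperator hα hg x₀ u t) ≤
      C * (|s| + |t|) * |t - s| := by
  have hint := (continuous_dampedVelocity hα hg u.continuous).intervalIntegrable (μ := volume)
  rw [dist_comm, dist_eq_norm]
  simp only [dampingOperator, ContinuousMap.coe_mk, add_sub_add_left_eq_sub]
  rw [intervalIntegral.integral_interval_sub_left (hint 0 t) (hint 0 s)]
  refine intervalIntegral.norm_integral_le_of_norm_le_const fun r hr => ?_
  have hr' : |r| ≤ |s| + |t| := by
    obtain h | h := mem_uIoc.1 hr <;> refine abs_le.2 ⟨?_, ?_⟩ <;>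
      linarith [neg_abs_le s, le_abs_self s, abs_nonneg s, neg_abs_le t, le_abs_self t,
        abs_nonneg t]
  exact (norm_dampedVelocity_le hα hC u r).trans
    (mul_le_mul_of_nonneg_left hr' ((norm_nonneg _).trans (hC 0)))

end

theorem exists_isVanishingDampingFlow [FiniteDimensional ℝ E] (hα : 0 ≤ α) (hg : Continuous g)
    (hC : ∀ y, ‖g y‖ ≤ C) (x₀ : E) :
    ∃ x v, IsVanishingDampingFlow α g x v ∧ x 0 = x₀ := by
  have : ProperSpace E := FiniteDimensional.proper ℝ E
  have hmodulus : ∀ s, Tendsto (fun t => C * (|s| + |t|) * |t - s|) (𝓝 s) (𝓝 0) := fun s => by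
    have : Continuous fun t => C * (|s| + |t|) * |t - s| := by fun_prop
    simpa using this.tendsto s
  obtain ⟨x, hx⟩ := (isVolterra_dampingOperator hα hg x₀).exists_eqOn_Ici
    (continuous_dampingOperator hα hg x₀) (isCompact_setOf_dist_le_of_modulus 0 x₀ hmodulus)
    fun u => ⟨dampingOperator_apply_zero hα hg x₀ u, dist_dampingOperator_apply_le hα hg x₀ hC u⟩
  have hvel := continuous_dampedVelocity hα hg x.continuous
  refine ⟨x, dampedVelocity α g x, ⟨x.continuous, hvel, dampedVelocity_zero x, fun t ht => ?_,
    fun t ht => hasDerivAt_dampedVelocity hα hg x.continuous ht⟩, ?_⟩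
  · refine ((hvel.integral_hasStrictDerivAt 0 t).hasDerivAt.const_add x₀).congr_of_eventuallyEq ?_
    filter_upwards [lt_mem_nhds ht] with s hs using (hx hs.le).symm
  · rw [← hx self_mem_Ici, dampingOperator_apply_zero]

end VanishingDamping

lemma lintegral_enorm_eq_top_of_tendsto_atTop {E : Type*} [NormedAddCommGroup E] {v : ℝ → E}
    (hv : Continuous v) {a : ℝ} (hlim : Tendsto (fun T => ∫ t in a..T, ‖v t‖) atTop atTop) :
    ∫⁻ t in Ioi a, ‖v t‖ₑ = ⊤ := by
  by_contra htop
  have hint : IntegrableOn v (Ioi a) := ⟨hv.aestronglyMeasurable, lt_top_iff_ne_top.2 htop⟩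
  exact not_tendsto_nhds_of_tendsto_atTop hlim _
    (intervalIntegral_tendsto_integral_Ioi a hint.norm tendsto_id)

section Lyapunov

variable {E : Type*} [NormedAddCommGroup E] [InnerProductSpace ℝ E]
  {f : E → ℝ} {g : E → E} {x v : ℝ → E}

/-- The Lyapunov function of Su, Boyd and Candès for `ẍ + (3/t) ẋ + ∇f(x) = 0`, where `v = ẋ` and
`f` is normalized to have minimum `f 0 = 0`. -/
noncomputable def lyapunov (f : E → ℝ) (x v : ℝ → E) (t : ℝ) : ℝ :=
  t ^ 2 * f (x t) + ‖(2 : ℝ) • x t + t • v t‖ ^ 2 / 2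

lemma lyapunov_zero : lyapunov f x v 0 = 2 * ‖x 0‖ ^ 2 := by
  simp [lyapunov, norm_smul]; ring

lemma sq_mul_le_lyapunov (t : ℝ) : t ^ 2 * f (x t) ≤ lyapunov f x v t :=
  le_add_of_nonneg_right (by positivity)

lemma two_mul_lyapunov_div_add_le {t : ℝ} (ht : 0 < t) (hle : f (x t) ≤ ⟪x t, g (x t)⟫) :
    2 * lyapunov f x v t / t + 2 * (-2 * ⟪x t, v t⟫ + t * ‖v t‖ ^ 2 - t * ⟪x t, g (x t)⟫) ≤
      4 * ‖x t‖ ^ 2 / t + 3 * t * ‖v t‖ ^ 2 := by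
  have hexpand : 2 * lyapunov f x v t / t =
      2 * t * f (x t) + 4 * ‖x t‖ ^ 2 / t + 4 * ⟪x t, v t⟫ + t * ‖v t‖ ^ 2 := by
    rw [lyapunov, norm_add_sq_real, real_inner_smul_left, real_inner_smul_right, norm_smul,
      norm_smul, Real.norm_two, Real.norm_of_nonneg ht.le]
    field_simp
    ring
  have := mul_le_mul_of_nonneg_left hle ht.le
  linarith

namespace IsVanishingDampingFlow

lemma continuous_lyapunov (h : IsVanishingDampingFlow 3 g x v) (hf : Continuous f) :
    Continuous (lyapunov f x v) := by
  have := h.continuous_pos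
  have := h.continuous_vel
  unfold lyapunov
  fun_prop

lemma hasDerivAt_two_smul_add (h : IsVanishingDampingFlow 3 g x v) {t : ℝ} (ht : 0 < t) :
    HasDerivAt (fun s => (2 : ℝ) • x s + s • v s) (-(t • g (x t))) t := by
  refine (((h.hasDerivAt_pos t ht).const_smul (2 : ℝ)).add
    ((hasDerivAt_id t).smul (h.hasDerivAt_vel t ht))).congr_deriv ?_
  have : t • (3 / t) • v t = (3 : ℝ) • v t := by rw [smul_smul, mul_div_cancel₀ _ ht.ne']
  simp only [id, neg_smul, smul_sub, smul_neg, this]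
  module

lemma hasDerivAt_sq_smul (h : IsVanishingDampingFlow 3 g x v) {t : ℝ} (ht : 0 < t) :
    HasDerivAt (fun s => s ^ 2 • x s) (t • ((2 : ℝ) • x t + t • v t)) t := by
  refine ((hasDerivAt_pow 2 t).smul (h.hasDerivAt_pos t ht)).congr_deriv ?_
  push_cast
  module

lemma hasDerivAt_mul_inner (h : IsVanishingDampingFlow 3 g x v) {t : ℝ} (ht : 0 < t) :
    HasDerivAt (fun s => s * ⟪x s, v s⟫)
      (-2 * ⟪x t, v t⟫ + t * ‖v t‖ ^ 2 - t * ⟪x t, g (x t)⟫) t := by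
  refine ((hasDerivAt_id t).mul
    ((h.hasDerivAt_pos t ht).inner ℝ (h.hasDerivAt_vel t ht))).congr_deriv ?_
  simp only [id, inner_sub_right, real_inner_smul_right, real_inner_self_eq_norm_sq]
  field_simp
  ring

end IsVanishingDampingFlow

variable [CompleteSpace E]

/-- A nonnegative potential `f` with gradient `g` which near the origin grows at least
quadratically and fails to be positively homogeneous of degree `1` only by a logarithmically
small factor: Euler's identity `⟪p, g p⟫ = f p` holds up to the error `f p / (2 (1 - log ‖p‖))`. -/
structure IsNearlyHomogeneous (f : E → ℝ) (g : E → E) : Prop where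
  hasGradientAt : ∀ p, HasGradientAt f (g p) p
  nonneg : ∀ p, 0 ≤ f p
  le_inner : ∀ p, f p ≤ ⟪p, g p⟫
  half_sq_norm_le : ∀ p, ‖p‖ ≤ 1 → ‖p‖ ^ 2 / 2 ≤ f p
  defect_le : ∀ p, ‖p‖ ≤ 1 → (⟪p, g p⟫ - f p) * (1 - Real.log ‖p‖) ≤ f p / 2

lemma IsNearlyHomogeneous.continuous (hf : IsNearlyHomogeneous f g) : Continuous f :=
  continuous_iff_continuousAt.2 fun p => (hf.hasGradientAt p).continuousAt

lemma IsNearlyHomogeneous.defect_mul_one_add_log_le (hf : IsNearlyHomogeneous f g) {p : E} {t : ℝ}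
    (ht : 1 ≤ t) (hpt : ‖p‖ ≤ 1 / t) : (⟪p, g p⟫ - f p) * (1 + Real.log t) ≤ f p / 2 := by
  have ht₀ : 0 < t := one_pos.trans_le ht
  obtain rfl | hp := eq_or_ne p 0
  · have := hf.nonneg 0
    have := mul_nonneg this (Real.log_nonneg ht)
    rw [inner_zero_left]
    linarith
  · have hlog : Real.log ‖p‖ ≤ -Real.log t := by
      rw [← Real.log_inv, ← one_div]
      exact Real.log_le_log (norm_pos_iff.2 hp) hpt
    refine (mul_le_mul_of_nonneg_left ?_ (sub_nonneg.2 (hf.le_inner p))).trans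
      (hf.defect_le p (hpt.trans ((div_le_one ht₀).2 ht)))
    linarith

lemma IsNearlyHomogeneous.defect_le_half (hf : IsNearlyHomogeneous f g) {p : E} (hp : ‖p‖ ≤ 1) :
    ⟪p, g p⟫ - f p ≤ f p / 2 := by
  simpa using hf.defect_mul_one_add_log_le le_rfl (hp.trans_eq one_div_one.symm)

namespace IsVanishingDampingFlow

lemma hasDerivAt_lyapunov (h : IsVanishingDampingFlow 3 g x v)
    (hfg : ∀ p, HasGradientAt f (g p) p) {t : ℝ} (ht : 0 < t) :
    HasDerivAt (lyapunov f x v) (-(2 * t * (⟪x t, g (x t)⟫ - f (x t)))) t := by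
  have hpotential : HasDerivAt (fun s => f (x s)) ⟪g (x t), v t⟫ t :=
    ((hfg (x t)).hasFDerivAt.comp_hasDerivAt t (h.hasDerivAt_pos t ht)).congr_deriv (by simp)
  refine (((hasDerivAt_pow 2 t).mul hpotential).add
    ((h.hasDerivAt_two_smul_add ht).norm_sq.div_const 2)).congr_deriv ?_
  simp only [inner_add_left, inner_neg_right, real_inner_smul_left, real_inner_smul_right,
    real_inner_comm (g (x t)) (v t)]
  push_cast
  ring

lemma antitoneOn_lyapunov (h : IsVanishingDampingFlow 3 g x v)
    (hfg : ∀ p, HasGradientAt f (g p) p) (hle : ∀ p, f p ≤ ⟪p, g p⟫) :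
    AntitoneOn (lyapunov f x v) (Ici 0) := by
  have hf : Continuous f := continuous_iff_continuousAt.2 fun p => (hfg p).continuousAt
  refine antitoneOn_of_hasDerivWithinAt_nonpos (convex_Ici 0)
    (h.continuous_lyapunov hf).continuousOn
    (fun t ht => (h.hasDerivAt_lyapunov hfg (by simpa using ht)).hasDerivWithinAt) fun t ht => ?_
  rw [interior_Ici] at ht
  have : 0 ≤ 2 * t * (⟪x t, g (x t)⟫ - f (x t)) :=
    mul_nonneg (mul_nonneg zero_le_two (le_of_lt ht)) (sub_nonneg.2 (hle _))
  linarith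

lemma lyapunov_le (h : IsVanishingDampingFlow 3 g x v) (hfg : ∀ p, HasGradientAt f (g p) p)
    (hle : ∀ p, f p ≤ ⟪p, g p⟫) {t : ℝ} (ht : 0 ≤ t) : lyapunov f x v t ≤ 2 * ‖x 0‖ ^ 2 :=
  (h.antitoneOn_lyapunov hfg hle self_mem_Ici ht ht).trans_eq lyapunov_zero

section Bounds

variable (h : IsVanishingDampingFlow 3 g x v) (hfg : ∀ p, HasGradientAt f (g p) p)
  (hnonneg : ∀ p, 0 ≤ f p) (hle : ∀ p, f p ≤ ⟪p, g p⟫) {t : ℝ} (ht : 0 ≤ t)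
include h hfg hnonneg hle ht

lemma norm_two_smul_add_le : ‖(2 : ℝ) • x t + t • v t‖ ≤ 2 * ‖x 0‖ := by
  have hE := h.lyapunov_le hfg hle ht
  have := mul_nonneg (sq_nonneg t) (hnonneg (x t))
  unfold lyapunov at hE
  exact (sq_le_sq₀ (norm_nonneg _) (by positivity)).1 (by linarith)

lemma norm_pos_le : ‖x t‖ ≤ ‖x 0‖ := by
  obtain rfl | ht' := ht.eq_or_lt
  · rfl
  have hx := h.continuous_pos
  have hv := h.continuous_vel
  have hint : ∫ s in 0..t, s • ((2 : ℝ) • x s + s • v s) = t ^ 2 • x t := by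
    rw [intervalIntegral.integral_eq_sub_of_hasDerivAt_of_le (f := fun s => s ^ 2 • x s) ht
      (by fun_prop) (fun s hs => h.hasDerivAt_sq_smul hs.1)
      (Continuous.intervalIntegrable (by fun_prop) _ _)]
    simp
  have hbound : ‖t ^ 2 • x t‖ ≤ t ^ 2 * ‖x 0‖ := calc
    ‖t ^ 2 • x t‖ ≤ ∫ s in 0..t, s * (2 * ‖x 0‖) := by
      rw [← hint]
      refine intervalIntegral.norm_integral_le_of_norm_le ht (ae_of_all _ fun s hs => ?_)
        (Continuous.intervalIntegrable (by fun_prop) _ _)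
      rw [norm_smul, Real.norm_of_nonneg hs.1.le]
      exact mul_le_mul_of_nonneg_left (h.norm_two_smul_add_le hfg hnonneg hle hs.1.le) hs.1.le
    _ = t ^ 2 * ‖x 0‖ := by rw [intervalIntegral.integral_mul_const, integral_id]; ring
  rw [norm_smul, Real.norm_of_nonneg (sq_nonneg t)] at hbound
  exact le_of_mul_le_mul_left hbound (by positivity)

lemma norm_smul_vel_le : ‖t • v t‖ ≤ 4 * ‖x 0‖ := calc
  ‖t • v t‖ = ‖(2 : ℝ) • x t + t • v t - (2 : ℝ) • x t‖ := by rw [add_sub_cancel_left]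
  _ ≤ ‖(2 : ℝ) • x t + t • v t‖ + ‖(2 : ℝ) • x t‖ := norm_sub_le _ _
  _ ≤ 2 * ‖x 0‖ + 2 * ‖x 0‖ := by
    rw [norm_smul, Real.norm_two]
    gcongr
    exacts [h.norm_two_smul_add_le hfg hnonneg hle ht, h.norm_pos_le hfg hnonneg hle ht]
  _ = 4 * ‖x 0‖ := by ring

end Bounds

section

variable (h : IsVanishingDampingFlow 3 g x v) (hf : IsNearlyHomogeneous f g)
  (hsmall : ‖x 0‖ ≤ 1 / 2)
include h hf hsmall

lemma norm_pos_le_one {t : ℝ} (ht : 0 ≤ t) : ‖x t‖ ≤ 1 := by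
  linarith [h.norm_pos_le hf.hasGradientAt hf.nonneg hf.le_inner ht]

lemma norm_pos_le_one_div {t : ℝ} (ht : 0 < t) : ‖x t‖ ≤ 1 / t := by
  have hsq : (t * ‖x t‖) ^ 2 / 2 ≤ 1 / 2 := calc
    (t * ‖x t‖) ^ 2 / 2 = t ^ 2 * (‖x t‖ ^ 2 / 2) := by ring
    _ ≤ t ^ 2 * f (x t) := by
      gcongr; exact hf.half_sq_norm_le _ (h.norm_pos_le_one hf hsmall ht.le)
    _ ≤ lyapunov f x v t := sq_mul_le_lyapunov t
    _ ≤ 2 * ‖x 0‖ ^ 2 := h.lyapunov_le hf.hasGradientAt hf.le_inner ht.le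
    _ ≤ 2 * (1 / 2) ^ 2 := by gcongr
    _ = 1 / 2 := by norm_num
  rw [le_div_iff₀' ht]
  exact (sq_le_one_iff₀ (by positivity)).1 (by linarith)

lemma monotoneOn_mul_lyapunov : MonotoneOn (fun t => t * lyapunov f x v t) (Ici 0) := by
  refine monotoneOn_of_hasDerivWithinAt_nonneg (convex_Ici 0)
    (continuous_id.mul (h.continuous_lyapunov hf.continuous)).continuousOn
    (fun t ht => ((hasDerivAt_id t).mul
      (h.hasDerivAt_lyapunov hf.hasGradientAt (by simpa using ht))).hasDerivWithinAt) fun t ht => ?_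
  rw [interior_Ici] at ht
  have hdefect := mul_le_mul_of_nonneg_left
    (hf.defect_le_half (h.norm_pos_le_one hf hsmall (le_of_lt ht))) (sq_nonneg t)
  have := sq_mul_le_lyapunov (f := f) (x := x) (v := v) t
  simp only [id]
  linarith

lemma lyapunov_one_pos (hx₀ : x 0 ≠ 0) : 0 < lyapunov f x v 1 := by
  have hcont := h.continuous_lyapunov hf.continuous
  have hzero : 0 < lyapunov f x v 0 := by rw [lyapunov_zero]; positivity
  obtain ⟨s, hs, hs₀, hs₁⟩ := (((hcont.tendsto 0).eventually_const_lt hzero).filter_mono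
    nhdsWithin_le_nhds |>.and (Ioo_mem_nhdsGT one_pos)).exists
  have := h.monotoneOn_mul_lyapunov hf hsmall hs₀.le (zero_le_one : (0 : ℝ) ≤ 1) hs₁.le
  simp only [one_mul] at this
  exact (mul_pos hs₀ hs).trans_le this

lemma monotoneOn_lyapunov_mul_one_add_log :
    MonotoneOn (fun t => lyapunov f x v t * (1 + Real.log t)) (Ici 1) := by
  have hlog : ∀ t ∈ Ici (1 : ℝ), HasDerivAt (fun s => 1 + Real.log s) t⁻¹ t := fun t ht =>
    (Real.hasDerivAt_log (one_pos.trans_le ht).ne').const_add 1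
  refine monotoneOn_of_hasDerivWithinAt_nonneg (convex_Ici 1)
    ((h.continuous_lyapunov hf.continuous).continuousOn.mul
      fun t ht => (hlog t ht).continuousAt.continuousWithinAt)
    (fun t ht => ((h.hasDerivAt_lyapunov hf.hasGradientAt
      (one_pos.trans_le (interior_subset ht))).mul
      (hlog t (interior_subset ht))).hasDerivWithinAt) fun t ht => ?_
  have ht₁ : 1 ≤ t := interior_subset ht
  have ht₀ : 0 < t := one_pos.trans_le ht₁
  have hdefect := mul_le_mul_of_nonneg_left
    (hf.defect_mul_one_add_log_le ht₁ (h.norm_pos_le_one_div hf hsmall ht₀)) ht₀.le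
  have hkinetic : t * f (x t) ≤ lyapunov f x v t * t⁻¹ := by
    rw [← div_eq_mul_inv, le_div_iff₀ ht₀]
    linarith [sq_mul_le_lyapunov (f := f) (x := x) (v := v) t]
  linarith

lemma lyapunov_one_div_le {t : ℝ} (ht : 1 ≤ t) :
    lyapunov f x v 1 / (1 + Real.log t) ≤ lyapunov f x v t := by
  have := h.monotoneOn_lyapunov_mul_one_add_log hf hsmall self_mem_Ici ht ht
  rw [div_le_iff₀ (by linarith [Real.log_nonneg ht])]
  simpa using this

lemma two_mul_lyapunov_one_div_add_le {t : ℝ} (ht : 1 ≤ t) :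
    2 * lyapunov f x v 1 * (t⁻¹ / (1 + Real.log t)) +
        2 * (-2 * ⟪x t, v t⟫ + t * ‖v t‖ ^ 2 - t * ⟪x t, g (x t)⟫) ≤
      4 / t ^ 3 + 12 * ‖x 0‖ * ‖v t‖ := by
  have ht₀ : 0 < t := one_pos.trans_le ht
  have hdecay : 2 * lyapunov f x v 1 * (t⁻¹ / (1 + Real.log t)) ≤ 2 * lyapunov f x v t / t := calc
    _ = 2 * (lyapunov f x v 1 / (1 + Real.log t)) / t := by ring
    _ ≤ 2 * lyapunov f x v t / t := by gcongr; exact h.lyapunov_one_div_le hf hsmall ht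
  have hpos : 4 * ‖x t‖ ^ 2 / t ≤ 4 / t ^ 3 := calc
    4 * ‖x t‖ ^ 2 / t ≤ 4 * (1 / t) ^ 2 / t := by
      gcongr; exact h.norm_pos_le_one_div hf hsmall ht₀
    _ = 4 / t ^ 3 := by field_simp
  have hvel : 3 * t * ‖v t‖ ^ 2 ≤ 12 * ‖x 0‖ * ‖v t‖ := calc
    3 * t * ‖v t‖ ^ 2 = 3 * ‖t • v t‖ * ‖v t‖ := by
      rw [norm_smul, Real.norm_of_nonneg ht₀.le]; ring
    _ ≤ 3 * (4 * ‖x 0‖) * ‖v t‖ := by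
      gcongr; exact h.norm_smul_vel_le hf.hasGradientAt hf.nonneg hf.le_inner ht₀.le
    _ = 12 * ‖x 0‖ * ‖v t‖ := by ring
  linarith [two_mul_lyapunov_div_add_le (v := v) ht₀ (hf.le_inner (x t))]

lemma abs_mul_inner_le_one {t : ℝ} (ht : 0 ≤ t) : |t * ⟪x t, v t⟫| ≤ 1 := calc
  |t * ⟪x t, v t⟫| = |⟪x t, t • v t⟫| := by rw [real_inner_smul_right]
  _ ≤ ‖x t‖ * ‖t • v t‖ := abs_real_inner_le_norm _ _
  _ ≤ ‖x 0‖ * (4 * ‖x 0‖) := by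
    gcongr
    exacts [h.norm_pos_le hf.hasGradientAt hf.nonneg hf.le_inner ht,
      h.norm_smul_vel_le hf.hasGradientAt hf.nonneg hf.le_inner ht]
  _ ≤ 1 / 2 * (4 * (1 / 2)) := by gcongr
  _ = 1 := by norm_num

lemma two_mul_lyapunov_one_mul_log_le {T : ℝ} (hT : 1 ≤ T) :
    2 * lyapunov f x v 1 * Real.log (1 + Real.log T) ≤
      12 * ‖x 0‖ * (∫ t in 1..T, ‖v t‖) + 6 := by
  have hv := h.continuous_vel
  let Φ := fun t => 2 * lyapunov f x v 1 * Real.log (1 + Real.log t) + 2 * (t * ⟪x t, v t⟫) +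
    2 * (t ^ 2)⁻¹
  have hderiv : ∀ t, 1 ≤ t → HasDerivAt Φ (2 * lyapunov f x v 1 * (t⁻¹ / (1 + Real.log t)) +
      2 * (-2 * ⟪x t, v t⟫ + t * ‖v t‖ ^ 2 - t * ⟪x t, g (x t)⟫) + -(4 / t ^ 3)) t := by
    intro t ht
    have ht₀ : 0 < t := one_pos.trans_le ht
    have hlog : 1 + Real.log t ≠ 0 := by linarith [Real.log_nonneg ht]
    refine (((((Real.hasDerivAt_log ht₀.ne').const_add 1).log hlog).const_mul _).add
      ((h.hasDerivAt_mul_inner ht₀).const_mul 2)).add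
      ((((hasDerivAt_pow 2 t).inv (pow_ne_zero 2 ht₀.ne')).const_mul 2).congr_deriv ?_)
    field_simp
    norm_num [mul_comm]
  have hgrowth : Φ T - Φ 1 ≤ ∫ t in 1..T, 12 * ‖x 0‖ * ‖v t‖ :=
    intervalIntegral.sub_le_integral_of_hasDeriv_right_of_le hT
      (fun t ht => (hderiv t ht.1).continuousAt.continuousWithinAt)
      (fun t ht => (hderiv t ht.1.le).hasDerivWithinAt)
      (Continuous.integrableOn_Icc (by fun_prop)) fun t ht => by
        linarith [h.two_mul_lyapunov_one_div_add_le hf hsmall ht.1.le]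
  rw [intervalIntegral.integral_const_mul] at hgrowth
  simp only [Φ, Real.log_one, add_zero, mul_zero, zero_add, one_pow, inv_one] at hgrowth
  have hstart := h.abs_mul_inner_le_one hf hsmall zero_le_one
  have hend := h.abs_mul_inner_le_one hf hsmall (zero_le_one.trans hT)
  have : 0 ≤ (T ^ 2)⁻¹ := by positivity
  linarith [le_abs_self (1 * ⟪x 1, v 1⟫), neg_abs_le (T * ⟪x T, v T⟫)]

lemma tendsto_integral_norm_vel_atTop (hx₀ : x 0 ≠ 0) :
    Tendsto (fun T => ∫ t in 1..T, ‖v t‖) atTop atTop := by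
  have hlog : Tendsto (fun T => Real.log (1 + Real.log T)) atTop atTop :=
    Real.tendsto_log_atTop.comp (tendsto_atTop_add_const_left _ 1 Real.tendsto_log_atTop)
  have hlower := tendsto_atTop_add_const_right _ (-6) <|
    hlog.const_mul_atTop (mul_pos zero_lt_two (h.lyapunov_one_pos hf hsmall hx₀))
  refine (tendsto_const_mul_atTop_of_pos (r := 12 * ‖x 0‖) (by positivity)).1
    (tendsto_atTop_mono' _ ?_ hlower)
  filter_upwards [eventually_ge_atTop 1] with T hT
  linarith [h.two_mul_lyapunov_one_mul_log_le hf hsmall hT]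

theorem lintegral_enorm_vel_eq_top (hx₀ : x 0 ≠ 0) : ∫⁻ t in Ioi 0, ‖v t‖ₑ = ⊤ :=
  top_le_iff.1 <| calc
    ⊤ = ∫⁻ t in Ioi 1, ‖v t‖ₑ := (lintegral_enorm_eq_top_of_tendsto_atTop h.continuous_vel
      (h.tendsto_integral_norm_vel_atTop hf hsmall hx₀)).symm
    _ ≤ ∫⁻ t in Ioi 0, ‖v t‖ₑ := lintegral_mono_set (Ioi_subset_Ioi zero_le_one)

end

end IsVanishingDampingFlow

end Lyapunov

section Radial

variable {φ : ℝ → ℝ}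

section Norm

variable {E : Type*} [NormedAddCommGroup E]

/-- The rotationally invariant potential with radial derivative `φ`, normalized to vanish at the
origin. -/
noncomputable def radialPotential (φ : ℝ → ℝ) (p : E) : ℝ := ∫ r in 0..‖p‖, φ r

lemma radialPotential_zero : radialPotential φ (0 : E) = 0 := by
  simp [radialPotential]

lemma radialPotential_nonneg (hφ : ∀ r, 0 ≤ φ r) (p : E) : 0 ≤ radialPotential φ p :=
  intervalIntegral.integral_nonneg (norm_nonneg p) fun r _ => hφ r

lemma radialPotential_pos (hφ : Continuous φ) (hpos : ∀ r, 0 < r → 0 < φ r) {p : E} (hp : p ≠ 0) :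
    0 < radialPotential φ p :=
  intervalIntegral.intervalIntegral_pos_of_pos_on (hφ.intervalIntegrable _ _)
    (fun r hr => hpos r hr.1) (norm_pos_iff.2 hp)

lemma radialPotential_le_norm_mul (hφ : Continuous φ) (hmono : Monotone φ) (p : E) :
    radialPotential φ p ≤ ‖p‖ * φ ‖p‖ := calc
  radialPotential φ p ≤ ∫ _ in 0..‖p‖, φ ‖p‖ :=
    intervalIntegral.integral_mono_on (norm_nonneg p) (hφ.intervalIntegrable _ _)
      intervalIntegrable_const fun r hr => hmono hr.2
  _ = ‖p‖ * φ ‖p‖ := by simp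

lemma half_sq_norm_le_radialPotential (hφ : Continuous φ) {p : E}
    (hle : ∀ r ∈ Icc 0 ‖p‖, r ≤ φ r) : ‖p‖ ^ 2 / 2 ≤ radialPotential φ p := calc
  ‖p‖ ^ 2 / 2 = ∫ r in 0..‖p‖, r := by rw [integral_id, zero_pow two_ne_zero, sub_zero]
  _ ≤ radialPotential φ p :=
    intervalIntegral.integral_mono_on (norm_nonneg p) intervalIntegral.intervalIntegrable_id
      (hφ.intervalIntegrable _ _) hle

variable [NormedSpace ℝ E]

lemma convexOn_radialPotential (hφ : Continuous φ) (hmono : Monotone φ) (hnonneg : ∀ r, 0 ≤ φ r) :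
    ConvexOn ℝ univ (radialPotential φ : E → ℝ) := by
  have hderiv : ∀ s, HasDerivAt (fun s => ∫ r in 0..s, φ r) (φ s) s := fun s =>
    (hφ.integral_hasStrictDerivAt 0 s).hasDerivAt
  have hconvex : ConvexOn ℝ univ fun s => ∫ r in 0..s, φ r :=
    Monotone.convexOn_univ_of_deriv (fun s => (hderiv s).differentiableAt)
      (by rwa [funext fun s => (hderiv s).deriv])
  have hincr : Monotone fun s => ∫ r in 0..s, φ r := monotone_of_hasDerivAt_nonneg hderiv hnonneg
  refine ⟨convex_univ, fun p hp q hq a b ha hb hab => ?_⟩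
  exact (hincr (convexOn_univ_norm.2 hp hq ha hb hab)).trans
    (hconvex.2 (mem_univ ‖p‖) (mem_univ ‖q‖) ha hb hab)

/-- The central field whose component along the outward unit vector `p / ‖p‖` is `φ ‖p‖`, extended
by `0` to the origin. -/
noncomputable def radialField (φ : ℝ → ℝ) (p : E) : E := (φ ‖p‖ / ‖p‖) • p

lemma norm_radialField_le (p : E) : ‖radialField φ p‖ ≤ |φ ‖p‖| := by
  rw [radialField, norm_smul, Real.norm_eq_abs, abs_div, abs_norm]
  exact mul_le_of_le_div₀ (abs_nonneg _) (norm_nonneg p) le_rfl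

lemma radialField_smul {e : E} (he : ‖e‖ = 1) (s : ℝ) :
    radialField φ (s • e) = radialField φ s • e := by
  simp only [radialField, norm_smul, he, mul_one, smul_smul, smul_eq_mul]

lemma continuous_radialField (hφ : Continuous φ) (hφ₀ : φ 0 = 0) :
    Continuous (radialField φ : E → E) := by
  refine continuous_iff_continuousAt.2 fun p => ?_
  obtain rfl | hp := eq_or_ne p 0
  · have hlim : Tendsto (fun q : E => |φ ‖q‖|) (𝓝 0) (𝓝 0) := by
      have : Continuous fun q : E => |φ ‖q‖| := by fun_prop
      simpa [hφ₀] using this.tendsto 0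
    rw [ContinuousAt, radialField, smul_zero]
    exact squeeze_zero_norm norm_radialField_le hlim
  · unfold radialField
    fun_prop (disch := exact norm_ne_zero_iff.2 hp)

end Norm

variable {E : Type*} [NormedAddCommGroup E] [InnerProductSpace ℝ E]

lemma inner_radialField_self (p : E) : ⟪p, radialField φ p⟫ = ‖p‖ * φ ‖p‖ := by
  obtain rfl | hp := eq_or_ne p 0
  · simp
  · rw [radialField, real_inner_smul_right, real_inner_self_eq_norm_sq]
    field_simp

variable [CompleteSpace E]

lemma hasGradientAt_norm {p : E} (hp : p ≠ 0) : HasGradientAt (‖·‖) (‖p‖⁻¹ • p) p := by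
  have hsqrt := (hasStrictFDerivAt_norm_sq p).hasFDerivAt.sqrt (by positivity)
  simp only [Real.sqrt_sq (norm_nonneg _)] at hsqrt
  refine hasGradientAt_iff_hasFDerivAt.2 (hsqrt.congr_fderiv ?_)
  ext q
  simp
  ring

lemma hasGradientAt_radialPotential (hφ : Continuous φ) (hφ₀ : φ 0 = 0) (p : E) :
    HasGradientAt (radialPotential φ) (radialField φ p) p := by
  have hderiv := (hφ.integral_hasStrictDerivAt 0 ‖p‖).hasDerivAt
  obtain rfl | hp := eq_or_ne p 0
  · rw [norm_zero, hφ₀, hasDerivAt_iff_isLittleO_nhds_zero] at hderiv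
    rw [hasGradientAt_iff_isLittleO_nhds_zero]
    simpa [radialField, radialPotential, Function.comp_def] using
      (hderiv.comp_tendsto (tendsto_norm_zero (E := E))).of_norm_right
  · rw [hasGradientAt_iff_hasFDerivAt]
    refine (hderiv.comp_hasFDerivAt p (hasGradientAt_norm hp).hasFDerivAt).congr_fderiv ?_
    rw [radialField, div_eq_mul_inv, mul_smul, map_smul _ (φ ‖p‖)]

lemma contDiff_one_of_hasGradientAt {f : E → ℝ} {g : E → E} (hfg : ∀ p, HasGradientAt f (g p) p)
    (hg : Continuous g) : ContDiff ℝ 1 f :=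
  contDiff_one_iff_hasFDerivAt.2
    ⟨_, (InnerProductSpace.toDual ℝ E).continuous.comp hg, fun p => (hfg p).hasFDerivAt⟩

end Radial

lemma IsVanishingDampingFlow.smul_of_norm_eq_one {E : Type*} [NormedAddCommGroup E]
    [InnerProductSpace ℝ E] {α : ℝ} {φ x v : ℝ → ℝ}
    (h : IsVanishingDampingFlow α (radialField φ) x v) {e : E} (he : ‖e‖ = 1) :
    IsVanishingDampingFlow α (radialField φ) (fun t => x t • e) (fun t => v t • e) where
  continuous_pos := h.continuous_pos.smul continuous_const
  continuous_vel := h.continuous_vel.smul continuous_const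
  vel_zero := by rw [h.vel_zero, zero_smul]
  hasDerivAt_pos t ht := (h.hasDerivAt_pos t ht).smul_const e
  hasDerivAt_vel t ht := by
    rw [radialField_smul he, smul_smul, ← sub_smul]
    exact (h.hasDerivAt_vel t ht).smul_const e

section LogForce

/-- The radial profile `s ↦ 1 / √(1 - log s)` on `(0, 1]`, extended by the constants `0` to the
left and `1` to the right. It vanishes at `0` so slowly that its potential is almost homogeneous of
degree `1`. -/
noncomputable def logForce (s : ℝ) : ℝ := if s ≤ 0 then 0 else (√(1 - Real.log (min s 1)))⁻¹

variable {s : ℝ}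

lemma logForce_of_nonpos (hs : s ≤ 0) : logForce s = 0 := if_pos hs

lemma logForce_of_pos (hs : 0 < s) : logForce s = (√(1 - Real.log (min s 1)))⁻¹ := if_neg hs.not_ge

lemma logForce_of_mem_Ioc (hs : s ∈ Ioc 0 1) : logForce s = (√(1 - Real.log s))⁻¹ := by
  rw [logForce_of_pos hs.1, min_eq_left hs.2]

lemma one_le_one_sub_log (hs : s ∈ Ioc 0 1) : 1 ≤ 1 - Real.log s :=
  le_sub_self_iff 1 |>.2 (Real.log_nonpos hs.1.le hs.2)

lemma min_one_mem_Ioc (hs : 0 < s) : min s 1 ∈ Ioc 0 1 := ⟨lt_min hs one_pos, min_le_right _ _⟩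

lemma logForce_pos (hs : 0 < s) : 0 < logForce s := by
  have := one_le_one_sub_log (min_one_mem_Ioc hs)
  rw [logForce_of_pos hs]
  positivity

lemma logForce_nonneg (s : ℝ) : 0 ≤ logForce s := by
  obtain hs | hs := le_or_gt s 0
  exacts [(logForce_of_nonpos hs).ge, (logForce_pos hs).le]

lemma logForce_le_one (s : ℝ) : logForce s ≤ 1 := by
  obtain hs | hs := le_or_gt s 0
  · exact (logForce_of_nonpos hs).trans_le zero_le_one
  · rw [logForce_of_pos hs]
    exact inv_le_one_of_one_le₀ (Real.one_le_sqrt.2 (one_le_one_sub_log (min_one_mem_Ioc hs)))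

lemma monotone_logForce : Monotone logForce := by
  intro a b hab
  obtain ha | ha := le_or_gt a 0
  · exact (logForce_of_nonpos ha).trans_le (logForce_nonneg b)
  · have hb := ha.trans_le hab
    have := one_le_one_sub_log (min_one_mem_Ioc hb)
    rw [logForce_of_pos ha, logForce_of_pos hb]
    gcongr

lemma tendsto_logForce_nhdsGT_zero : Tendsto logForce (𝓝[>] 0) (𝓝 0) := by
  have hsqrt : Tendsto (fun s => √(1 - Real.log s)) (𝓝[>] 0) atTop :=
    Real.tendsto_sqrt_atTop.comp <| tendsto_atTop_add_const_left _ 1 <|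
      tendsto_neg_atBot_atTop.comp Real.tendsto_log_nhdsGT_zero
  refine hsqrt.inv_tendsto_atTop.congr' ?_
  filter_upwards [Ioc_mem_nhdsGT one_pos] with s hs using (logForce_of_mem_Ioc hs).symm

lemma continuous_logForce : Continuous logForce := by
  refine continuous_iff_continuousAt.2 fun s => ?_
  obtain hs | rfl | hs := lt_trichotomy s 0
  · refine (continuousAt_const (y := (0 : ℝ))).congr ?_
    filter_upwards [Iio_mem_nhds hs] with r hr using (logForce_of_nonpos (le_of_lt hr)).symm
  · refine continuousAt_iff_continuous_left'_right'.2 ⟨?_, ?_⟩ <;>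
      rw [ContinuousWithinAt, logForce_of_nonpos le_rfl]
    · refine tendsto_const_nhds.congr' ?_
      filter_upwards [self_mem_nhdsWithin] with r hr using (logForce_of_nonpos (le_of_lt hr)).symm
    · exact tendsto_logForce_nhdsGT_zero
  · have hlog := one_le_one_sub_log (min_one_mem_Ioc hs)
    have hmin_ne := (min_one_mem_Ioc hs).1.ne'
    have hsqrt_ne : √(1 - Real.log (min s 1)) ≠ 0 := by positivity
    have hcont : ContinuousAt (fun r => (√(1 - Real.log (min r 1)))⁻¹) s := by
      fun_prop (disch := assumption)
    refine hcont.congr ?_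
    filter_upwards [Ioi_mem_nhds hs] with r hr using (logForce_of_pos hr).symm

lemma self_le_logForce (hs : s ∈ Icc 0 1) : s ≤ logForce s := by
  obtain rfl | hs₀ := hs.1.eq_or_lt
  · exact logForce_nonneg 0
  · rw [logForce_of_mem_Ioc ⟨hs₀, hs.2⟩]
    have hlog : 1 - Real.log s ≤ s⁻¹ := by
      linarith [Real.log_le_sub_one_of_pos (inv_pos.2 hs₀), Real.log_inv s]
    rw [le_inv_comm₀ hs₀ (Real.sqrt_pos.2 (one_pos.trans_le (one_le_one_sub_log ⟨hs₀, hs.2⟩)))]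
    exact Real.sqrt_le_iff.2 ⟨by positivity, hlog.trans
      (le_self_pow₀ (one_le_inv_iff₀.2 ⟨hs₀, hs.2⟩) two_ne_zero)⟩

lemma hasDerivAt_logForce (hs : s ∈ Ioo 0 1) :
    HasDerivAt logForce (logForce s ^ 3 / (2 * s)) s := by
  have hlog : 0 < 1 - Real.log s := one_pos.trans_le (one_le_one_sub_log ⟨hs.1, hs.2.le⟩)
  have hs₀ := hs.1.ne'
  have hsqrt : √(1 - Real.log s) ≠ 0 := by positivity
  refine (((((Real.hasDerivAt_log hs₀).const_sub 1).sqrt hlog.ne').inv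
    hsqrt).congr_of_eventuallyEq ?_).congr_deriv ?_
  · filter_upwards [Ioo_mem_nhds hs.1 hs.2] with r hr
      using logForce_of_mem_Ioc (Ioo_subset_Ioc_self hr)
  · rw [logForce_of_mem_Ioc (Ioo_subset_Ioc_self hs)]
    field_simp

lemma logForce_sq_mul_one_sub_log (hs : s ∈ Ioc 0 1) :
    logForce s ^ 2 * (1 - Real.log s) = 1 := by
  have := one_le_one_sub_log hs
  rw [logForce_of_mem_Ioc hs, inv_pow, Real.sq_sqrt (by positivity),
    inv_mul_cancel₀ (by positivity)]

lemma mul_logForce_sub_integral_eq (hs : s ∈ Icc 0 1) :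
    s * logForce s - ∫ r in 0..s, logForce r = (∫ r in 0..s, logForce r ^ 3) / 2 := by
  have hcont := continuous_logForce
  have hderiv : ∀ r ∈ Ioo 0 s,
      HasDerivAt (fun r => r * logForce r) (logForce r + logForce r ^ 3 / 2) r := fun r hr => by
    refine ((hasDerivAt_id r).mul
      (hasDerivAt_logForce (Ioo_subset_Ioo_right hs.2 hr))).congr_deriv ?_
    have := hr.1.ne'
    simp only [id]
    field_simp
  have hftc := intervalIntegral.integral_eq_sub_of_hasDerivAt_of_le hs.1 (by fun_prop) hderiv
    (Continuous.intervalIntegrable (by fun_prop) _ _)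
  rw [intervalIntegral.integral_add (Continuous.intervalIntegrable (by fun_prop) _ _)
    (Continuous.intervalIntegrable (by fun_prop) _ _), intervalIntegral.integral_div] at hftc
  linarith

lemma mul_logForce_sub_integral_mul_one_sub_log_le (hs : s ∈ Ioc 0 1) :
    (s * logForce s - ∫ r in 0..s, logForce r) * (1 - Real.log s) ≤
      (∫ r in 0..s, logForce r) / 2 := by
  have hcont := continuous_logForce
  have hcube : ∫ r in 0..s, logForce r ^ 3 ≤ logForce s ^ 2 * ∫ r in 0..s, logForce r := by
    rw [← intervalIntegral.integral_const_mul]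
    refine intervalIntegral.integral_mono_on hs.1.le
      (Continuous.intervalIntegrable (by fun_prop) _ _)
      (Continuous.intervalIntegrable (by fun_prop) _ _) fun r hr => ?_
    rw [pow_succ]
    gcongr
    exacts [logForce_nonneg r, logForce_nonneg r, monotone_logForce hr.2]
  calc (s * logForce s - ∫ r in 0..s, logForce r) * (1 - Real.log s)
      ≤ (logForce s ^ 2 * ∫ r in 0..s, logForce r) / 2 * (1 - Real.log s) := by
        rw [mul_logForce_sub_integral_eq (Ioc_subset_Icc_self hs)]
        have := one_le_one_sub_log hs
        gcongr
    _ = logForce s ^ 2 * (1 - Real.log s) * (∫ r in 0..s, logForce r) / 2 := by ring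
    _ = (∫ r in 0..s, logForce r) / 2 := by rw [logForce_sq_mul_one_sub_log hs, one_mul]

lemma isNearlyHomogeneous_radialPotential_logForce {E : Type*} [NormedAddCommGroup E]
    [InnerProductSpace ℝ E] [CompleteSpace E] :
    IsNearlyHomogeneous (radialPotential logForce : E → ℝ) (radialField logForce) where
  hasGradientAt := hasGradientAt_radialPotential continuous_logForce (logForce_of_nonpos le_rfl)
  nonneg := radialPotential_nonneg logForce_nonneg
  le_inner p := by
    rw [inner_radialField_self]
    exact radialPotential_le_norm_mul continuous_logForce monotone_logForce p
  half_sq_norm_le p hp := half_sq_norm_le_radialPotential continuous_logForce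
    fun r hr => self_le_logForce (Icc_subset_Icc_right hp hr)
  defect_le p hp := by
    rw [inner_radialField_self]
    obtain rfl | hp₀ := eq_or_ne p 0
    · simp [radialPotential_zero]
    · exact mul_logForce_sub_integral_mul_one_sub_log_le ⟨norm_pos_iff.2 hp₀, hp⟩

lemma exists_isVanishingDampingFlow_logForce (E : Type*) [NormedAddCommGroup E]
    [InnerProductSpace ℝ E] [Nontrivial E] {α c : ℝ} (hα : 0 ≤ α) (hc : 0 ≤ c) :
    ∃ x v : ℝ → E, IsVanishingDampingFlow α (radialField logForce) x v ∧ ‖x 0‖ = c := by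
  have hbound : ∀ y : ℝ, ‖radialField logForce y‖ ≤ 1 := fun y =>
    (norm_radialField_le y).trans <|
      (abs_of_nonneg (logForce_nonneg _)).trans_le (logForce_le_one _)
  obtain ⟨x, v, h, hx₀⟩ := exists_isVanishingDampingFlow hα
    (continuous_radialField continuous_logForce (logForce_of_nonpos le_rfl)) hbound c
  obtain ⟨e, he⟩ := exists_norm_eq E zero_le_one
  exact ⟨_, _, h.smul_of_norm_eq_one he, by
    rw [norm_smul, hx₀, he, mul_one, Real.norm_of_nonneg hc]⟩

end LogForce

theorem nesterov_flow_infinite_path_length_general (E : Type*) [NormedAddCommGroup E]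
    [InnerProductSpace ℝ E] [CompleteSpace E] [Nontrivial E] :
    ∃ (f : E → ℝ) (X₀ : E) (X X' X'' : ℝ → E),
      ConvexOn ℝ Set.univ f ∧
      ContDiff ℝ 1 f ∧
      (∀ x : E, x ≠ 0 → f 0 < f x) ∧
      X₀ ≠ 0 ∧
      ContinuousOn X (Set.Ici 0) ∧
      (∀ t > (0:ℝ), HasDerivAt X (X' t) t) ∧
      (∀ t > (0:ℝ), HasDerivAt X' (X'' t) t) ∧
      ContinuousOn X'' (Set.Ioi 0) ∧
      X 0 = X₀ ∧
      Filter.Tendsto X' (nhdsWithin 0 (Set.Ioi 0)) (nhds 0) ∧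
      (∀ t > (0:ℝ), X'' t + (3 / t) • X' t + gradient f (X t) = 0) ∧
      (∫⁻ t in Set.Ioi (0:ℝ), (‖X' t‖₊ : ENNReal)) = ⊤ := by
  have hf := isNearlyHomogeneous_radialPotential_logForce (E := E)
  have hg : Continuous (radialField logForce : E → E) :=
    continuous_radialField continuous_logForce (logForce_of_nonpos le_rfl)
  obtain ⟨x, v, h, hx₀⟩ :=
    exists_isVanishingDampingFlow_logForce E (zero_le_three (α := ℝ)) one_half_pos.le
  have hx₀_ne : x 0 ≠ 0 := norm_ne_zero_iff.1 (hx₀.trans_ne one_half_pos.ne')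
  refine ⟨radialPotential logForce, x 0, x, v, fun t => -(3 / t) • v t - radialField logForce (x t),
    convexOn_radialPotential continuous_logForce monotone_logForce logForce_nonneg,
    contDiff_one_of_hasGradientAt hf.hasGradientAt hg, fun p hp => ?_, hx₀_ne,
    h.continuous_pos.continuousOn, h.hasDerivAt_pos, h.hasDerivAt_vel, h.continuousOn_acc hg, rfl,
    h.tendsto_vel, fun t _ => ?_, h.lintegral_enorm_vel_eq_top hf hx₀.le hx₀_ne⟩
  · rw [radialPotential_zero]
    exact radialPotential_pos continuous_logForce (fun r hr => logForce_pos hr) hp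
  · rw [(hf.hasGradientAt _).gradient]
    module

/-- There exist a convex `C¹` function `f : ℝ² → ℝ` with unique minimizer at
the origin, a point `X₀ ≠ 0`, and a solution `X` of the critical Nesterov flow
`Ẍ(t) + (3/t)·Ẋ(t) + ∇f(X(t)) = 0` with `X(0) = X₀`, `Ẋ(0⁺) = 0`, whose path length
`∫₀^∞ ‖Ẋ(t)‖ dt` is infinite. -/
theorem nesterov_flow_infinite_path_length :
    ∃ (f : EuclideanSpace ℝ (Fin 2) → ℝ) (X₀ : EuclideanSpace ℝ (Fin 2))
      (X X' X'' : ℝ → EuclideanSpace ℝ (Fin 2)),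
      ConvexOn ℝ Set.univ f ∧
      ContDiff ℝ 1 f ∧
      (∀ x : EuclideanSpace ℝ (Fin 2), x ≠ 0 → f 0 < f x) ∧
      X₀ ≠ 0 ∧
      ContinuousOn X (Set.Ici 0) ∧
      (∀ t > (0:ℝ), HasDerivAt X (X' t) t) ∧
      (∀ t > (0:ℝ), HasDerivAt X' (X'' t) t) ∧
      ContinuousOn X'' (Set.Ioi 0) ∧
      X 0 = X₀ ∧
      Filter.Tendsto X' (nhdsWithin 0 (Set.Ioi 0)) (nhds 0) ∧
      (∀ t > (0:ℝ), X'' t + (3 / t) • X' t + gradient f (X t) = 0) ∧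
      (∫⁻ t in Set.Ioi (0:ℝ), (‖X' t‖₊ : ENNReal)) = ⊤ :=
  nesterov_flow_infinite_path_length_general _
end

section
/- Let f : ℝ^d → ℝ be convex and continuously differentiable with f(0) = 0 = min f, and let X : [0,∞) → ℝ^d be a bounded solution of the critical Nesterov flow Ẍ(t) + (3/t)·Ẋ(t) + ∇f(X(t)) = 0 (t > 0) with Ẋ(t) → 0 as t → 0⁺. If there exist constants c₀ > 0 and T₀ ≥ e such that f(X(t)) ≥ c₀/(t²·log t) for all t ≥ T₀, then both weighted integrals diverge: ∫₀^∞ t·f(X(t)) dt = ∞ and ∫₀^∞ t·‖Ẋ(t)‖² dt = ∞. -/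
/-!
Write `E(t) = t² (f(X) - f(z)) + ½ t² ‖Ẋ‖²` for a minimizer `z` of `f`. The flow equation gives
`Ė = 2t ((f(X) - f(z)) - ‖Ẋ‖²)`, so as long as `E` stays bounded the two weighted integrals diverge
together, and the first one is bounded below by `∫ dt / (t log t) = ∞`.

The energy `E` is controlled through the Lyapunov function
`L(t) = t² (f(X) - f(z)) + ½ ‖2 (X - z) + t Ẋ‖²`, which is nonincreasing by convexity. Hence
`2 (X - z) + t Ẋ = t⁻¹ d/dt (t² (X - z))` is bounded; integrating it bounds `X - z`, and then `t Ẋ`.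
-/

open MeasureTheory Set Filter
open scoped Gradient RealInnerProductSpace

section IntegralDivergence

variable {g h G : ℝ → ℝ} {a c C : ℝ}

lemma lintegral_ofReal_eq_top_of_not_integrableOn {s : Set ℝ} (hs : MeasurableSet s)
    (hg : ContinuousOn g s) (hg_nonneg : ∀ t ∈ s, 0 ≤ g t) (hint : ¬IntegrableOn g s) :
    ∫⁻ t in s, ENNReal.ofReal (g t) = ⊤ := by
  contrapose! hint
  exact (lintegral_ofReal_ne_top_iff_integrable (hg.aestronglyMeasurable hs)
    (ae_restrict_of_forall_mem hs hg_nonneg)).1 hint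

lemma not_integrableOn_Ioi_of_div_mul_log_le (hc : 0 < c)
    (hg : ∀ᶠ t in atTop, c / (t * Real.log t) ≤ g t) : ¬IntegrableOn g (Ioi a) := by
  have hderiv : ∀ᶠ t in atTop,
      HasDerivAt (fun s ↦ Real.log (Real.log s)) (1 / (t * Real.log t)) t := by
    filter_upwards [eventually_gt_atTop 1] with t ht
    convert! (Real.hasDerivAt_log (by positivity)).log (Real.log_pos ht).ne' using 1
    rw [inv_eq_one_div, div_div]
  refine not_integrableOn_of_tendsto_norm_atTop_of_deriv_isBigO_filter atTop (Ioi_mem_atTop a)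
    (hderiv.mono fun t ht ↦ ht.differentiableAt)
    (tendsto_norm_atTop_atTop.comp (Real.tendsto_log_atTop.comp Real.tendsto_log_atTop))
    (Asymptotics.IsBigO.of_bound c⁻¹ ?_)
  filter_upwards [hderiv, hg, eventually_gt_atTop 1] with t ht hgt ht1
  have hlog : 0 < Real.log t := Real.log_pos ht1
  rw [ht.deriv, Real.norm_of_nonneg (by positivity)]
  calc 1 / (t * Real.log t) = c⁻¹ * (c / (t * Real.log t)) := by field_simp
    _ ≤ c⁻¹ * ‖g t‖ := by gcongr; exact hgt.trans (le_abs_self _)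

lemma integrableOn_Ioi_of_hasDerivAt_sub_of_le (hG : ∀ t ≥ a, HasDerivAt G (g t - h t) t)
    (hG_le : ∀ t ≥ a, G t ≤ C) (hg : ContinuousOn g (Ici a)) (hg_nonneg : ∀ t ≥ a, 0 ≤ g t)
    (hh : IntegrableOn h (Ioi a)) : IntegrableOn g (Ioi a) := by
  have hg_Icc (b : ℝ) : ContinuousOn g (Icc a b) := hg.mono Icc_subset_Ici_self
  refine integrableOn_Ioi_of_intervalIntegral_norm_bounded (C - G a + ((∫ t in Ioi a, h t) + 1)) a
    (fun b ↦ (hg_Icc b).integrableOn_Icc.mono_set Ioc_subset_Icc_self) tendsto_id ?_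
  have hh_le : ∀ᶠ b in atTop, ∫ t in a..b, h t ≤ (∫ t in Ioi a, h t) + 1 :=
    (intervalIntegral_tendsto_integral_Ioi a hh tendsto_id).eventually_le_const (lt_add_one _)
  filter_upwards [hh_le, eventually_ge_atTop a] with b hb hab
  have hg_int : IntervalIntegrable g volume a b := (hg_Icc b).intervalIntegrable_of_Icc hab
  have hh_int : IntervalIntegrable h volume a b :=
    (intervalIntegrable_iff_integrableOn_Ioc_of_le hab).2 (hh.mono_set Ioc_subset_Ioi_self)
  have hsub : (∫ t in a..b, g t) - ∫ t in a..b, h t = G b - G a := by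
    rw [← intervalIntegral.integral_sub hg_int hh_int]
    refine intervalIntegral.integral_eq_sub_of_hasDerivAt (fun t ht ↦ ?_) (hg_int.sub hh_int)
    exact hG t (uIcc_of_le hab ▸ ht).1
  have hnorm : ∫ t in a..b, ‖g t‖ = ∫ t in a..b, g t :=
    intervalIntegral.integral_congr fun t ht ↦
      Real.norm_of_nonneg (hg_nonneg t (uIcc_of_le hab ▸ ht).1)
  rw [hnorm]
  linarith [hG_le b hab]

end IntegralDivergence

lemma norm_le_of_norm_two_smul_add_smul_deriv_le {E : Type*} [NormedAddCommGroup E]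
    [NormedSpace ℝ E] {Y Y' : ℝ → E} {a R : ℝ} (ha : 0 < a)
    (hY : ∀ t ≥ a, HasDerivAt Y (Y' t) t) (hYa : ‖Y a‖ ≤ R)
    (hR : ∀ t ≥ a, ‖(2 : ℝ) • Y t + t • Y' t‖ ≤ 2 * R) {t : ℝ} (ht : a ≤ t) : ‖Y t‖ ≤ R := by
  have hderiv (s : ℝ) (hs : a ≤ s) :
      HasDerivAt (fun s ↦ s ^ 2 • Y s) (s • ((2 : ℝ) • Y s + s • Y' s)) s :=
    ((hasDerivAt_pow 2 s).smul (hY s hs)).congr_deriv (by push_cast; module)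
  have hbarrier : ‖t ^ 2 • Y t‖ ≤ t ^ 2 * R := by
    refine image_norm_le_of_norm_deriv_right_le_deriv_boundary (B := fun s ↦ s ^ 2 * R)
      (B' := fun s ↦ s * (2 * R))
      (fun s hs ↦ (hderiv s hs.1).continuousAt.continuousWithinAt)
      (fun s hs ↦ (hderiv s hs.1).hasDerivWithinAt) ?_
      (fun s ↦ ((hasDerivAt_pow 2 s).mul_const R).congr_deriv (by push_cast; ring)) ?_ ⟨ht, le_rfl⟩
    · rw [norm_smul, Real.norm_of_nonneg (sq_nonneg a)]
      gcongr
    · intro s hs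
      have hs_pos : 0 < s := ha.trans_le hs.1
      rw [norm_smul, Real.norm_of_nonneg hs_pos.le]
      gcongr
      exact hR s hs.1
  rw [norm_smul, Real.norm_of_nonneg (sq_nonneg t)] at hbarrier
  exact le_of_mul_le_mul_left hbarrier (pow_pos (ha.trans_le ht) 2)

section Gradient

variable {E : Type*} [NormedAddCommGroup E] [InnerProductSpace ℝ E] [CompleteSpace E]
  {f : E → ℝ}

lemma hasDerivAt_comp_of_hasGradientAt {X : ℝ → E} {v w : E} {t : ℝ} (hf : HasGradientAt f w (X t))
    (hX : HasDerivAt X v t) : HasDerivAt (fun s ↦ f (X s)) ⟪w, v⟫ t := by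
  simpa using! hf.hasFDerivAt.comp_hasDerivAt t hX

lemma sub_le_inner_gradient_of_convexOn (hconv : ConvexOn ℝ univ f) {x : E}
    (hf : DifferentiableAt ℝ f x) (z : E) : f x - f z ≤ ⟪∇ f x, x - z⟫ := by
  have hline : ConvexOn ℝ univ (fun s : ℝ ↦ f (AffineMap.lineMap z x s)) :=
    hconv.comp_affineMap (AffineMap.lineMap z x)
  have hderiv : HasDerivAt (fun s : ℝ ↦ f (AffineMap.lineMap z x s)) ⟪∇ f x, x - z⟫ 1 :=
    hasDerivAt_comp_of_hasGradientAt (by simpa using hf.hasGradientAt) AffineMap.hasDerivAt_lineMap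
  simpa [slope_def_field] using
    hline.slope_le_of_hasDerivAt (mem_univ 0) (mem_univ 1) one_pos hderiv

end Gradient

/-- `X` solves the critical Nesterov flow `Ẍ + (3/t) Ẋ + ∇f(X) = 0` on `(0, ∞)` with velocity
`V = Ẋ`, written as a first-order system. -/
structure IsNesterovFlow {E : Type*} [NormedAddCommGroup E] [InnerProductSpace ℝ E]
    [CompleteSpace E] (f : E → ℝ) (X V : ℝ → E) : Prop where
  hasDerivAt_position : ∀ t > 0, HasDerivAt X (V t) t
  hasDerivAt_velocity : ∀ t > 0, HasDerivAt V (-(3 / t) • V t - ∇ f (X t)) t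

namespace IsNesterovFlow

variable {E : Type*} [NormedAddCommGroup E] [InnerProductSpace ℝ E]
  {f : E → ℝ} {X V : ℝ → E} {z : E} {a t : ℝ}

/-- The energy `t² (f(X) - f(z)) + ½ t² ‖Ẋ‖²`, where `z` plays the role of a minimizer of `f`; its
derivative compares the two weighted integrands. -/
noncomputable def energy (f : E → ℝ) (X V : ℝ → E) (z : E) (t : ℝ) : ℝ :=
  t ^ 2 * (f (X t) - f z) + 1 / 2 * t ^ 2 * ‖V t‖ ^ 2

/-- The Lyapunov function `t² (f(X) - f(z)) + ½ ‖2 (X - z) + t Ẋ‖²` of Su, Boyd and Candès, where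
`z` plays the role of a minimizer of `f`. -/
noncomputable def lyapunov (f : E → ℝ) (X V : ℝ → E) (z : E) (t : ℝ) : ℝ :=
  t ^ 2 * (f (X t) - f z) + 1 / 2 * ‖(2 : ℝ) • (X t - z) + t • V t‖ ^ 2

lemma norm_two_smul_add_smul_le_sqrt_lyapunov (hz : ∀ x, f z ≤ f x) :
    ‖(2 : ℝ) • (X t - z) + t • V t‖ ≤ √(2 * lyapunov f X V z t) := by
  apply Real.le_sqrt_of_sq_le
  have hgap : 0 ≤ t ^ 2 * (f (X t) - f z) := mul_nonneg (sq_nonneg t) (sub_nonneg.2 (hz _))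
  unfold lyapunov
  linarith

variable [CompleteSpace E]

lemma hasDerivAt_sq_mul_sub (hflow : IsNesterovFlow f X V) (hf : Differentiable ℝ f) (z : E)
    (ht : 0 < t) :
    HasDerivAt (fun s ↦ s ^ 2 * (f (X s) - f z))
      (2 * t * (f (X t) - f z) + t ^ 2 * ⟪∇ f (X t), V t⟫) t := by
  have hfX := hasDerivAt_comp_of_hasGradientAt (hf (X t)).hasGradientAt
    (hflow.hasDerivAt_position t ht)
  exact ((hasDerivAt_pow 2 t).mul (hfX.sub_const (f z))).congr_deriv (by push_cast; ring)

lemma hasDerivAt_energy (hflow : IsNesterovFlow f X V) (hf : Differentiable ℝ f) (z : E)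
    (ht : 0 < t) :
    HasDerivAt (energy f X V z) (2 * t * (f (X t) - f z - ‖V t‖ ^ 2)) t := by
  have hkinetic : HasDerivAt (fun s ↦ 1 / 2 * s ^ 2 * ‖V s‖ ^ 2)
      (-2 * t * ‖V t‖ ^ 2 - t ^ 2 * ⟪∇ f (X t), V t⟫) t := by
    refine (((hasDerivAt_pow 2 t).const_mul (1 / 2)).mul
      (hflow.hasDerivAt_velocity t ht).norm_sq).congr_deriv ?_
    rw [inner_sub_right, inner_smul_right, real_inner_self_eq_norm_sq,
      real_inner_comm (∇ f (X t)) (V t)]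
    field_simp
    push_cast
    ring
  exact ((hflow.hasDerivAt_sq_mul_sub hf z ht).add hkinetic).congr_deriv (by ring)

lemma hasDerivAt_lyapunov (hflow : IsNesterovFlow f X V) (hf : Differentiable ℝ f) (z : E)
    (ht : 0 < t) :
    HasDerivAt (lyapunov f X V z) (2 * t * (f (X t) - f z - ⟪∇ f (X t), X t - z⟫)) t := by
  have hW : HasDerivAt (fun s ↦ (2 : ℝ) • (X s - z) + s • V s) (-t • ∇ f (X t)) t := by
    refine ((((hflow.hasDerivAt_position t ht).sub_const z).const_smul (2 : ℝ)).add
      ((hasDerivAt_id' t).smul (hflow.hasDerivAt_velocity t ht))).congr_deriv ?_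
    match_scalars <;> field_simp
    norm_num
  refine ((hflow.hasDerivAt_sq_mul_sub hf z ht).add
    (hW.norm_sq.const_mul (1 / 2))).congr_deriv ?_
  rw [inner_smul_right, real_inner_comm (∇ f (X t)), inner_add_right,
    inner_smul_right, inner_smul_right]
  ring

lemma antitoneOn_lyapunov (hflow : IsNesterovFlow f X V) (hconv : ConvexOn ℝ univ f)
    (hf : Differentiable ℝ f) (z : E) : AntitoneOn (lyapunov f X V z) (Ioi 0) := by
  refine antitoneOn_of_hasDerivWithinAt_nonpos (convex_Ioi 0)
    (fun t ht ↦ (hflow.hasDerivAt_lyapunov hf z ht).continuousAt.continuousWithinAt)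
    (fun t ht ↦ (hflow.hasDerivAt_lyapunov hf z
      (interior_subset ht)).hasDerivWithinAt) fun t ht ↦ ?_
  have ht_pos : 0 < t := interior_subset ht
  have hgrad := sub_le_inner_gradient_of_convexOn hconv (hf (X t)) z
  exact mul_nonpos_of_nonneg_of_nonpos (by positivity) (sub_nonpos.2 hgrad)

lemma exists_norm_smul_velocity_le (hflow : IsNesterovFlow f X V) (hconv : ConvexOn ℝ univ f)
    (hf : Differentiable ℝ f) (hz : ∀ x, f z ≤ f x) (ha : 0 < a) :
    ∃ R, ∀ t ≥ a, ‖t • V t‖ ≤ R := by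
  set R := max ‖X a - z‖ (√(2 * lyapunov f X V z a) / 2)
  have hW (t : ℝ) (ht : a ≤ t) : ‖(2 : ℝ) • (X t - z) + t • V t‖ ≤ 2 * R :=
    calc ‖(2 : ℝ) • (X t - z) + t • V t‖
        ≤ √(2 * lyapunov f X V z t) := norm_two_smul_add_smul_le_sqrt_lyapunov hz
      _ ≤ √(2 * lyapunov f X V z a) := by
        gcongr
        exact hflow.antitoneOn_lyapunov hconv hf z ha (ha.trans_le ht) ht
      _ ≤ 2 * R := by linarith [le_max_right ‖X a - z‖ (√(2 * lyapunov f X V z a) / 2)]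
  have hX (t : ℝ) (ht : a ≤ t) : ‖X t - z‖ ≤ R :=
    norm_le_of_norm_two_smul_add_smul_deriv_le (Y := fun s ↦ X s - z) ha
      (fun s hs ↦ (hflow.hasDerivAt_position s (ha.trans_le hs)).sub_const z)
      (le_max_left _ _) hW ht
  refine ⟨4 * R, fun t ht ↦ ?_⟩
  calc ‖t • V t‖ = ‖((2 : ℝ) • (X t - z) + t • V t) - (2 : ℝ) • (X t - z)‖ := by
        rw [add_sub_cancel_left]
    _ ≤ ‖(2 : ℝ) • (X t - z) + t • V t‖ + ‖(2 : ℝ) • (X t - z)‖ := norm_sub_le _ _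
    _ ≤ 2 * R + 2 * R := by
      rw [norm_smul (2 : ℝ), Real.norm_two]
      gcongr
      exacts [hW t ht, hX t ht]
    _ = 4 * R := by ring

lemma exists_energy_le (hflow : IsNesterovFlow f X V) (hconv : ConvexOn ℝ univ f)
    (hf : Differentiable ℝ f) (hz : ∀ x, f z ≤ f x) (ha : 0 < a) :
    ∃ C, ∀ t ≥ a, energy f X V z t ≤ C := by
  obtain ⟨R, hR⟩ := hflow.exists_norm_smul_velocity_le hconv hf hz ha
  refine ⟨lyapunov f X V z a + 1 / 2 * R ^ 2, fun t ht ↦ ?_⟩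
  calc energy f X V z t = t ^ 2 * (f (X t) - f z) + 1 / 2 * ‖t • V t‖ ^ 2 := by
        rw [energy, norm_smul, mul_pow, Real.norm_eq_abs, sq_abs, mul_assoc]
    _ ≤ lyapunov f X V z t + 1 / 2 * R ^ 2 := by
      gcongr
      exacts [le_add_of_nonneg_right (by positivity), hR t ht]
    _ ≤ lyapunov f X V z a + 1 / 2 * R ^ 2 := by
      gcongr
      exact hflow.antitoneOn_lyapunov hconv hf z ha (ha.trans_le ht) ht

lemma continuousOn_mul_sub (hflow : IsNesterovFlow f X V) (hf : Continuous f) (z : E) :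
    ContinuousOn (fun t ↦ t * (f (X t) - f z)) (Ioi 0) := by
  have hX : ContinuousOn X (Ioi 0) := HasDerivAt.continuousOn hflow.hasDerivAt_position
  fun_prop

lemma continuousOn_mul_norm_velocity_sq (hflow : IsNesterovFlow f X V) :
    ContinuousOn (fun t ↦ t * ‖V t‖ ^ 2) (Ioi 0) := by
  have hV : ContinuousOn V (Ioi 0) := HasDerivAt.continuousOn hflow.hasDerivAt_velocity
  fun_prop

lemma integrableOn_mul_sub_of_integrableOn_mul_norm_velocity_sq (hflow : IsNesterovFlow f X V)
    (hconv : ConvexOn ℝ univ f) (hf : Differentiable ℝ f) (hz : ∀ x, f z ≤ f x) (ha : 0 < a)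
    (hV : IntegrableOn (fun t ↦ t * ‖V t‖ ^ 2) (Ioi a)) :
    IntegrableOn (fun t ↦ t * (f (X t) - f z)) (Ioi a) := by
  obtain ⟨C, hC⟩ := hflow.exists_energy_le hconv hf hz ha
  refine integrableOn_Ioi_of_hasDerivAt_sub_of_le (G := fun t ↦ 1 / 2 * energy f X V z t)
    (C := 1 / 2 * C) (fun t ht ↦ ?_) (fun t ht ↦ ?_)
    ((hflow.continuousOn_mul_sub hf.continuous z).mono (Ici_subset_Ioi.2 ha)) (fun t ht ↦ ?_) hV
  · exact ((hflow.hasDerivAt_energy hf z (ha.trans_le ht)).const_mul (1 / 2)).congr_deriv (by ring)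
  · linarith [hC t ht]
  · exact mul_nonneg (ha.le.trans ht) (sub_nonneg.2 (hz _))

end IsNesterovFlow

theorem nesterov_weighted_integrals_diverge_general {E : Type*} [NormedAddCommGroup E]
    [InnerProductSpace ℝ E] [CompleteSpace E] {f : E → ℝ} {X V : ℝ → E} {z : E} {c : ℝ}
    (hflow : IsNesterovFlow f X V) (hconv : ConvexOn ℝ univ f) (hf : Differentiable ℝ f)
    (hz : ∀ x, f z ≤ f x) (hc : 0 < c)
    (hlower : ∀ᶠ t in atTop, c / (t ^ 2 * Real.log t) ≤ f (X t) - f z) :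
    (∫⁻ t in Ioi (0 : ℝ), ENNReal.ofReal (t * (f (X t) - f z))) = ⊤ ∧
    (∫⁻ t in Ioi (0 : ℝ), ENNReal.ofReal (t * ‖V t‖ ^ 2)) = ⊤ := by
  have hgap (a : ℝ) : ¬IntegrableOn (fun t ↦ t * (f (X t) - f z)) (Ioi a) := by
    refine not_integrableOn_Ioi_of_div_mul_log_le hc ?_
    filter_upwards [hlower, eventually_gt_atTop 0] with t ht ht_pos
    calc c / (t * Real.log t) = t * (c / (t ^ 2 * Real.log t)) := by field_simp
      _ ≤ t * (f (X t) - f z) := by gcongr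
  have hvel : ¬IntegrableOn (fun t ↦ t * ‖V t‖ ^ 2) (Ioi 0) := fun hint ↦
    hgap 1 <| hflow.integrableOn_mul_sub_of_integrableOn_mul_norm_velocity_sq hconv hf hz one_pos
      (hint.mono_set (Ioi_subset_Ioi zero_le_one))
  exact ⟨lintegral_ofReal_eq_top_of_not_integrableOn measurableSet_Ioi
      (hflow.continuousOn_mul_sub hf.continuous z)
      (fun t ht ↦ mul_nonneg (le_of_lt ht) (sub_nonneg.2 (hz _))) (hgap 0),
    lintegral_ofReal_eq_top_of_not_integrableOn measurableSet_Ioi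
      hflow.continuousOn_mul_norm_velocity_sq
      (fun t ht ↦ mul_nonneg (le_of_lt ht) (sq_nonneg _)) hvel⟩

/-- along a bounded solution of the critical Nesterov flow for a convex
`C¹` potential `f` with `f(0) = 0 = min f`, if `f(X(t)) ≥ c₀/(t²·log t)` for all
`t ≥ T₀ ≥ e`, then the weighted integrals `∫₀^∞ t·f(X(t)) dt` and
`∫₀^∞ t·‖Ẋ(t)‖² dt` both diverge. -/
theorem nesterov_weighted_integrals_diverge (d : ℕ)
    (f : EuclideanSpace ℝ (Fin d) → ℝ)
    (hconv : ConvexOn ℝ Set.univ f) (hf : ContDiff ℝ 1 f)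
    (hf0 : f 0 = 0) (hmin : ∀ x, 0 ≤ f x)
    (X X' X'' : ℝ → EuclideanSpace ℝ (Fin d))
    (hXcont : ContinuousOn X (Set.Ici 0))
    (hX' : ∀ t > (0:ℝ), HasDerivAt X (X' t) t)
    (hX'' : ∀ t > (0:ℝ), HasDerivAt X' (X'' t) t)
    (hX''cont : ContinuousOn X'' (Set.Ioi 0))
    (hX'0 : Filter.Tendsto X' (nhdsWithin 0 (Set.Ioi 0)) (nhds 0))
    (hODE : ∀ t > (0:ℝ), X'' t + (3 / t) • X' t + gradient f (X t) = 0)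
    (hbdd : ∃ B : ℝ, ∀ t ≥ (0:ℝ), ‖X t‖ ≤ B)
    (c₀ T₀ : ℝ) (hc₀ : 0 < c₀) (hT₀ : Real.exp 1 ≤ T₀)
    (hlower : ∀ t ≥ T₀, f (X t) ≥ c₀ / (t ^ 2 * Real.log t)) :
    (∫⁻ t in Set.Ioi (0:ℝ), ENNReal.ofReal (t * f (X t))) = ⊤ ∧
    (∫⁻ t in Set.Ioi (0:ℝ), ENNReal.ofReal (t * ‖X' t‖ ^ 2)) = ⊤ := by
  have hflow : IsNesterovFlow f X X' :=
    ⟨hX', fun t ht ↦ (hX'' t ht).congr_deriv (by linear_combination (norm := module) hODE t ht)⟩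
  simpa [hf0] using nesterov_weighted_integrals_diverge_general (z := 0) hflow hconv
    (hf.differentiable one_ne_zero) (by simpa [hf0] using hmin) hc₀
    (by simpa [hf0] using (eventually_ge_atTop T₀).mono hlower)
end
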